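/- Let N ≥ 3 be an integer and let K ⊆ ℤ/Nℤ. Suppose K can be partitioned into disjoint clusters K = ⋃_{α∈A} C_α such that for some integer γ with 1 ≤ γ < N/2: (i) every cluster C_α has in-diameter at most γ, and (ii) for all α ≠ α', the cyclic distance d(C_α, C_{α'}) is strictly greater than γ. Then K is not sos-valid; i.e., there is no finite family of functions h_i : ℤ/Nℤ → ℂ, each supported on K, with cos(π/N) − cos((2j+1)π/N) = Σ_i |h_i(j)|² for all j ∈ ℤ/Nℤ. -/

import Mathlib

/-!
Every function on `ℤ/Nℤ` whose frequencies are represented by integers `|m| ≤ γ < N/2` extends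
to a trigonometric polynomial on the circle. The functional `bandEval` discards all other
frequencies and evaluates this extension at `j = -1/2`, the midpoint between the two vertices
at which the facet function vanishes.

The facet function only has frequencies `0, ±1`, and its extension takes the negative value
`cos (π / N) - 1` at the midpoint (`bandEval_facet`). On the other hand, in `|h|²` with `h`
supported on `K`, the products of two frequencies from distinct clusters have frequency
larger than `γ`, so they are discarded, while products within a cluster are all kept and extend
to the squared modulus of the extension of that part of `h`. Hence `bandEval` is nonnegative on
`|h|²` (`bandEval_normSq_nonneg`), a contradiction.
-/

open Real Finset

/-- The cyclic distance on `ℤ/Nℤ`: `d(a,b) = min{|m| : m ∈ ℤ, m ≡ a − b (mod N)}`. -/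
def cycDist (N : ℕ) (a b : ZMod N) : ℕ := min (a - b).val (b - a).val

/-- `C ⊆ ℤ/Nℤ` has in-diameter at most `γ` if it is contained in an interval
`{x, x+1, …, x+γ}`. -/
def HasInDiamLE (N γ : ℕ) (C : Finset (ZMod N)) : Prop :=
  ∃ x : ZMod N, ∀ c ∈ C, ∃ t : ℕ, t ≤ γ ∧ c = x + (t : ZMod N)

/-- The pure frequency `e_k : ℤ/Nℤ → ℂ`, `e_k(j) = exp(2πi·kj/N)`. -/
noncomputable def freq (N : ℕ) (k j : ZMod N) : ℂ :=
  Complex.exp (2 * Real.pi * Complex.I * (k.val : ℂ) * (j.val : ℂ) / N)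

/-- `h : ℤ/Nℤ → ℂ` is supported on `K` if it is a `ℂ`-linear combination of the
pure frequencies `e_k`, `k ∈ K`. -/
def SupportedOn (N : ℕ) (K : Finset (ZMod N)) (h : ZMod N → ℂ) : Prop :=
  ∃ c : ZMod N → ℂ, h = fun j => ∑ k ∈ K, c k * freq N k j

/-- `K ⊆ ℤ/Nℤ` is sos-valid if the facet function `cos(π/N) − cos((2j+1)π/N)` of the
regular `N`-gon is a finite sum of squared moduli of functions supported on `K`. -/
def SosValid (N : ℕ) (K : Finset (ZMod N)) : Prop :=
  ∃ (m : ℕ) (h : Fin m → ZMod N → ℂ), (∀ i, SupportedOn N K (h i)) ∧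
    ∀ j : ZMod N,
      Real.cos (π / N) - Real.cos ((2 * (j.val : ℝ) + 1) * π / N) =
        ∑ i, Complex.normSq (h i j)

open scoped ComplexOrder ComplexConjugate

/-- The value `exp (-iπn/N)` at `j = -1/2` of the frequency `n ∈ ℤ` on the circle. -/
noncomputable def midExp (N : ℕ) (n : ℤ) : ℂ :=
  Complex.exp (-(Real.pi * Complex.I * n / N))

/-- The value at `j = -1/2` of the frequency `d`, lifted to its integer representative of least
absolute value; frequencies with representative larger than `γ` are given weight zero. -/
noncomputable def bandWeight (N γ : ℕ) (d : ZMod N) : ℂ :=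
  if d.valMinAbs.natAbs ≤ γ then midExp N d.valMinAbs else 0

/-- Evaluation at `j = -1/2` of the part of `F` with frequencies at most `γ`, scaled by `N`. -/
noncomputable def bandEval (N γ : ℕ) [NeZero N] (F : ZMod N → ℂ) : ℂ :=
  ∑ d, bandWeight N γ d * ∑ j, F j * ZMod.stdAddChar (-(d * j))

lemma freq_eq_stdAddChar (N : ℕ) [NeZero N] (k j : ZMod N) :
    freq N k j = ZMod.stdAddChar (k * j) := by
  have h : k * j = (((k.val * j.val : ℕ) : ℤ) : ZMod N) := by simp
  rw [h, ZMod.stdAddChar_coe, freq]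
  push_cast
  congr 1
  ring

lemma conj_stdAddChar (N : ℕ) [NeZero N] (x : ZMod N) :
    conj (ZMod.stdAddChar x : ℂ) = ZMod.stdAddChar (-x) := by
  rw [AddChar.map_neg_eq_conj]

lemma midExp_sub (N : ℕ) (a b : ℤ) :
    midExp N (a - b) = midExp N a * conj (midExp N b) := by
  simp only [midExp, ← Complex.exp_conj, ← Complex.exp_add]
  congr 1
  simp
  ring

lemma bandEval_stdAddChar (N γ : ℕ) [NeZero N] (k : ZMod N) :
    bandEval N γ (fun j => ZMod.stdAddChar (k * j)) = N * bandWeight N γ k := by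
  have h : ∀ d : ZMod N, ∑ j, (ZMod.stdAddChar (k * j) : ℂ) * ZMod.stdAddChar (-(d * j)) =
      if k = d then (N : ℂ) else 0 := by
    intro d
    have := AddChar.sum_mulShift (k - d) (ZMod.isPrimitive_stdAddChar N)
    rw [ZMod.card] at this
    simp only [sub_eq_zero] at this
    push_cast at this
    rw [← this]
    refine Finset.sum_congr rfl fun j _ => ?_
    rw [← AddChar.map_add_eq_mul]
    congr 1
    ring
  simp [bandEval, h, mul_comm]

lemma bandEval_sum (N γ : ℕ) [NeZero N] {ι : Type*} (s : Finset ι) (F : ι → ZMod N → ℂ) :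
    bandEval N γ (fun j => ∑ i ∈ s, F i j) = ∑ i ∈ s, bandEval N γ (F i) := by
  simp only [bandEval]
  rw [Finset.sum_comm]
  refine Finset.sum_congr rfl fun d _ => ?_
  rw [← Finset.mul_sum, Finset.sum_comm]
  simp only [Finset.sum_mul]

lemma bandEval_const_mul (N γ : ℕ) [NeZero N] (a : ℂ) (F : ZMod N → ℂ) :
    bandEval N γ (fun j => a * F j) = a * bandEval N γ F := by
  simp only [bandEval, Finset.mul_sum]
  refine Finset.sum_congr rfl fun d _ => Finset.sum_congr rfl fun j _ => ?_
  ring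

lemma bandWeight_eq (N γ : ℕ) [NeZero N] (hγ : 2 * γ < N) (d : ZMod N) (n : ℤ)
    (hn : n.natAbs ≤ γ) (hd : d = (n : ZMod N)) : bandWeight N γ d = midExp N n := by
  have h : d.valMinAbs = n := by
    rw [ZMod.valMinAbs_spec]
    refine ⟨hd, ?_, ?_⟩ <;> omega
  rw [bandWeight, h, if_pos hn]

lemma bandWeight_eq_zero (N γ : ℕ) [NeZero N] (k k' : ZMod N)
    (h : γ < cycDist N k k') : bandWeight N γ (k - k') = 0 := by
  rw [bandWeight, if_neg]
  rw [ZMod.valMinAbs_natAbs_eq_min]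
  have h1 : k' - k = -(k - k') := by ring
  rw [cycDist, h1, ZMod.neg_val] at h
  split_ifs at h <;> omega

/-- The frequencies `0, 1, -1` of the facet function all survive in `bandEval` since `1 ≤ γ`, so
it returns the facet function extended to the circle, at angle `0`. -/
lemma bandEval_facet (N γ : ℕ) [NeZero N] (hγ1 : 1 ≤ γ) (hγ2 : 2 * γ < N) :
    bandEval N γ (fun j : ZMod N =>
      ((Real.cos (π / N) - Real.cos ((2 * (j.val : ℝ) + 1) * π / N) : ℝ) : ℂ)) =
      ((N * (Real.cos (π / N) - 1) : ℝ) : ℂ) := by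
  have hexp : ∀ j : ZMod N,
      ((Real.cos (π / N) - Real.cos ((2 * (j.val : ℝ) + 1) * π / N) : ℝ) : ℂ) =
      ∑ m : Fin 3, (![(Complex.cos (π / N)), -(1 / 2) * Complex.exp (π * Complex.I / N),
        -(1 / 2) * Complex.exp (-(π * Complex.I / N))] m) *
        ZMod.stdAddChar ((![0, 1, -1] : Fin 3 → ZMod N) m * j) := by
    intro j
    have e1 : (ZMod.stdAddChar j : ℂ) = Complex.exp (2 * π * Complex.I * j.val / N) := by
      have : j = ((j.val : ℤ) : ZMod N) := by simp
      conv_lhs => rw [this, ZMod.stdAddChar_coe]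
      simp
    have e2 : (ZMod.stdAddChar (-j) : ℂ) = Complex.exp (-(2 * π * Complex.I * j.val / N)) := by
      rw [AddChar.map_neg_eq_inv, e1, ← Complex.exp_neg]
    simp only [Fin.sum_univ_three, Matrix.cons_val_zero, Matrix.cons_val_one, Matrix.cons_val,
      zero_mul, one_mul, neg_mul, AddChar.map_zero_eq_one, e1, e2, mul_one]
    push_cast
    have : Complex.cos ((2 * (j.val : ℂ) + 1) * π / N) =
      (Complex.exp (π * Complex.I / N + 2 * π * Complex.I * j.val / N) +
        Complex.exp (-(π * Complex.I / N) + -(2 * π * Complex.I * j.val / N))) / 2 := by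
      rw [Complex.cos]
      congr 3 <;> ring
    rw [this, Complex.exp_add, Complex.exp_add]
    ring
  simp only [hexp]
  rw [bandEval_sum]
  simp only [bandEval_const_mul, bandEval_stdAddChar]
  have w0 := bandWeight_eq N γ hγ2 0 0 (by simp) (by simp)
  have w1 := bandWeight_eq N γ hγ2 1 1 (by simpa using hγ1) (by simp)
  have w2 := bandWeight_eq N γ hγ2 (-1) (-1) (by simpa using hγ1) (by simp)
  simp only [Fin.sum_univ_three, Matrix.cons_val_zero, Matrix.cons_val_one, Matrix.cons_val,
    w0, w1, w2, midExp]
  have a1 : Complex.exp (π * Complex.I / N) * Complex.exp (-(π * Complex.I * ((1 : ℤ) : ℂ) / N))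
      = 1 := by
    rw [← Complex.exp_add]; simp
  have a2 : Complex.exp (-(π * Complex.I / N)) *
      Complex.exp (-(π * Complex.I * ((-1 : ℤ) : ℂ) / N)) = 1 := by
    rw [← Complex.exp_add, Complex.exp_eq_one_iff]
    exact ⟨0, by push_cast; ring⟩
  have a0 : Complex.exp (-(π * Complex.I * ((0 : ℤ) : ℂ) / N)) = 1 := by simp
  push_cast at a0 a1 a2 ⊢
  linear_combination (N : ℂ) * Complex.cos (π / N) * a0 - (N : ℂ) / 2 * a1 - (N : ℂ) / 2 * a2

/-- Within an interval `x, …, x + γ`, the weights form the rank-one kernel of the squared modulus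
of a trigonometric polynomial at the midpoint. -/
lemma cluster_sum_nonneg (N γ : ℕ) [NeZero N] (hγ2 : 2 * γ < N) (C : Finset (ZMod N))
    (hC : HasInDiamLE N γ C) (c : ZMod N → ℂ) :
    0 ≤ ∑ k ∈ C, ∑ k' ∈ C, c k * conj (c k') * bandWeight N γ (k - k') := by
  obtain ⟨x, hx⟩ := hC
  choose! t ht hk using hx
  have h : ∑ k ∈ C, ∑ k' ∈ C, c k * conj (c k') * bandWeight N γ (k - k') =
      (∑ k ∈ C, c k * midExp N (t k)) * conj (∑ k ∈ C, c k * midExp N (t k)) := by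
    rw [map_sum, Finset.sum_mul_sum]
    refine Finset.sum_congr rfl fun k hkC => Finset.sum_congr rfl fun k' hkC' => ?_
    have h1 := ht k hkC
    have h2 := ht k' hkC'
    rw [bandWeight_eq N γ hγ2 (k - k') ((t k : ℤ) - t k') (by omega), midExp_sub, map_mul]
    · ring
    · conv_lhs => rw [hk k hkC, hk k' hkC']
      push_cast
      ring
  rw [h, Complex.mul_conj]
  exact_mod_cast Complex.normSq_nonneg _

lemma bandEval_normSq_nonneg (N γ : ℕ) [NeZero N] (hγ2 : 2 * γ < N) (K : Finset (ZMod N))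
    (P : Finset (Finset (ZMod N)))
    (hcover : K = P.biUnion id)
    (hdisj : ∀ C ∈ P, ∀ C' ∈ P, C ≠ C' → Disjoint C C')
    (hdiam : ∀ C ∈ P, HasInDiamLE N γ C)
    (hsep : ∀ C ∈ P, ∀ C' ∈ P, C ≠ C' → ∀ k ∈ C, ∀ k' ∈ C', γ < cycDist N k k')
    (h : ZMod N → ℂ) (hh : SupportedOn N K h) :
    0 ≤ bandEval N γ (fun j => (Complex.normSq (h j) : ℂ)) := by
  obtain ⟨c, rfl⟩ := hh
  have e : ∀ j : ZMod N, (Complex.normSq (∑ k ∈ K, c k * freq N k j) : ℂ) =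
      ∑ k ∈ K, ∑ k' ∈ K, (c k * conj (c k')) * ZMod.stdAddChar ((k - k') * j) := by
    intro j
    rw [← Complex.mul_conj, map_sum, Finset.sum_mul_sum]
    refine Finset.sum_congr rfl fun k _ => Finset.sum_congr rfl fun k' _ => ?_
    rw [freq_eq_stdAddChar, freq_eq_stdAddChar, map_mul (starRingEnd ℂ), conj_stdAddChar,
      sub_mul, sub_eq_add_neg, AddChar.map_add_eq_mul]
    ring
  have hpd : Set.PairwiseDisjoint (↑P : Set (Finset (ZMod N))) id :=
    fun C hC C' hC' hne => hdisj C hC C' hC' hne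
  have key : bandEval N γ (fun j => (Complex.normSq (∑ k ∈ K, c k * freq N k j) : ℂ)) =
      N * ∑ C ∈ P, ∑ k ∈ C, ∑ k' ∈ C, c k * conj (c k') * bandWeight N γ (k - k') := by
    simp only [e, bandEval_sum, bandEval_const_mul, bandEval_stdAddChar]
    rw [hcover, Finset.sum_biUnion hpd, Finset.mul_sum]
    refine Finset.sum_congr rfl fun C hC => ?_
    rw [Finset.mul_sum]
    refine Finset.sum_congr rfl fun k hk => ?_
    -- Only the cluster `C` containing `k` contributes to the inner sum.
    rw [Finset.sum_biUnion hpd, Finset.sum_eq_single C, Finset.mul_sum]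
    · exact Finset.sum_congr rfl fun k' _ => by ring
    · intro C' hC' hne
      refine Finset.sum_eq_zero fun k' hk' => ?_
      rw [bandWeight_eq_zero N γ k k' (hsep C hC C' hC' hne.symm k hk k' hk')]
      simp
    · exact fun hn => absurd hC hn
  rw [key]
  exact mul_nonneg (Nat.cast_nonneg N)
    (Finset.sum_nonneg fun C hC => cluster_sum_nonneg N γ hγ2 C (hdiam C hC) c)

/-- If `K ⊆ ℤ/Nℤ` can be partitioned into clusters of in-diameter at most `γ` that are
pairwise at cyclic distance greater than `γ` (for some `1 ≤ γ < N/2`), then `K` is not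
sos-valid. -/
theorem clustering_not_sosValid (N : ℕ) (hN : 3 ≤ N) (K : Finset (ZMod N))
    (γ : ℕ) (hγ1 : 1 ≤ γ) (hγ2 : 2 * γ < N)
    (P : Finset (Finset (ZMod N)))
    (hcover : K = P.biUnion id)
    (hdisj : ∀ C ∈ P, ∀ C' ∈ P, C ≠ C' → Disjoint C C')
    (hdiam : ∀ C ∈ P, HasInDiamLE N γ C)
    (hsep : ∀ C ∈ P, ∀ C' ∈ P, C ≠ C' → ∀ k ∈ C, ∀ k' ∈ C', γ < cycDist N k k') :
    ¬ SosValid N K := by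
  rintro ⟨m, h, hsupp, heq⟩
  have : NeZero N := ⟨by omega⟩
  have h1 := bandEval_facet N γ hγ1 hγ2
  simp only [heq, Complex.ofReal_sum] at h1
  rw [bandEval_sum] at h1
  have h2 : 0 ≤ ∑ i, bandEval N γ (fun j => (Complex.normSq (h i j) : ℂ)) :=
    Finset.sum_nonneg fun i _ =>
      bandEval_normSq_nonneg N γ hγ2 K P hcover hdisj hdiam hsep (h i) (hsupp i)
  rw [h1, Complex.zero_le_real] at h2
  have hNpos : (3 : ℝ) ≤ N := by exact_mod_cast hN
  have hcos : Real.cos (π / N) < 1 := by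
    rw [← Real.cos_zero]
    refine Real.cos_lt_cos_of_nonneg_of_le_pi le_rfl ?_ (by positivity)
    exact div_le_self Real.pi_pos.le (by linarith)
  nlinarith
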